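/- Lipschitz-type bound for the G-MFCQ function: for all x, y ∈ ℝⁿ, s(x) − s(y) ≤ 2‖p‖₂ ‖x − y‖₂. -/

import Mathlib

/-!
For unit vectors `b` and `u`, write `A_x(b) = -∑ₖ bₖ (Kₖ + δₖ(x))`. Then
`uᵀ A_x(b) u = uᵀ A_y(b) u - 2 bᵀ M(u) (x - y)`, where `M(u)ᵢⱼ = uᵀ Lᵢⱼ u`. By Cauchy–Schwarz and
the definition of the spectral norm, the last term is at most
`2 ‖M(u)‖ ‖x - y‖₂ ≤ 2 ‖p‖₂ ‖x - y‖₂` (`dotProduct_mulVec_le`, `le_pencilNorm`). Taking the infimum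
over `u` and then the supremum over `b` gives the bound.

All infima and suprema involved are over nonempty bounded sets, because the unit sphere is compact
and nonempty in positive dimension (`isCompact_sphere'`, `exists_vecNorm_eq_one`).
-/


open Matrix

noncomputable section

/-- Euclidean (ℓ₂) norm of a finite real vector. -/
def vecNorm {k : ℕ} (u : Fin k → ℝ) : ℝ := Real.sqrt (∑ i, u i ^ 2)

/-- The matrix pencil `p(x, X) = F₀ + ∑ₖ xₖ Kₖ + ∑ᵢ ∑ⱼ Xᵢⱼ Lᵢⱼ`. -/
def pencil {n m : ℕ} (F0 : Matrix (Fin m) (Fin m) ℝ)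
    (K : Fin n → Matrix (Fin m) (Fin m) ℝ)
    (L : Fin n → Fin n → Matrix (Fin m) (Fin m) ℝ)
    (x : Fin n → ℝ) (X : Matrix (Fin n) (Fin n) ℝ) : Matrix (Fin m) (Fin m) ℝ :=
  F0 + ∑ k, x k • K k + ∑ i, ∑ j, X i j • L i j

/-- Negative semidefinite real matrix. -/
def NegSemidef' {k : ℕ} (A : Matrix (Fin k) (Fin k) ℝ) : Prop := (-A).PosSemidef

/-- Negative definite real matrix. -/
def NegDef' {k : ℕ} (A : Matrix (Fin k) (Fin k) ℝ) : Prop := (-A).PosDef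

/-- The BMI feasible set `F = {x : p(x, xxᵀ) ⪯ 0}`. -/
def feasSet {n m : ℕ} (F0 : Matrix (Fin m) (Fin m) ℝ)
    (K : Fin n → Matrix (Fin m) (Fin m) ℝ)
    (L : Fin n → Fin n → Matrix (Fin m) (Fin m) ℝ) : Set (Fin n → ℝ) :=
  {x | NegSemidef' (pencil F0 K L x (vecMulVec x x))}

/-- Feasibility distance `d_F(x) = inf {‖x − a‖₂ : a ∈ F}`. -/
def distF {n m : ℕ} (F0 : Matrix (Fin m) (Fin m) ℝ)
    (K : Fin n → Matrix (Fin m) (Fin m) ℝ)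
    (L : Fin n → Fin n → Matrix (Fin m) (Fin m) ℝ) (x : Fin n → ℝ) : ℝ :=
  sInf {r | ∃ a ∈ feasSet F0 K L, r = vecNorm (x - a)}

/-- `δₖ(x) = 2 ∑ᵢ xᵢ L_{k i}`. -/
def deltaMat {n m : ℕ} (L : Fin n → Fin n → Matrix (Fin m) (Fin m) ℝ)
    (k : Fin n) (x : Fin n → ℝ) : Matrix (Fin m) (Fin m) ℝ :=
  (2 : ℝ) • ∑ i, x i • L k i

/-- The MFCQ condition at a point `x`. -/
def MFCQ {n m : ℕ} (F0 : Matrix (Fin m) (Fin m) ℝ)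
    (K : Fin n → Matrix (Fin m) (Fin m) ℝ)
    (L : Fin n → Fin n → Matrix (Fin m) (Fin m) ℝ) (x : Fin n → ℝ) : Prop :=
  ∃ b : Fin n → ℝ,
    NegDef' (pencil F0 K L x (vecMulVec x x) + ∑ k, b k • (K k + deltaMat L k x))

/-- Smallest eigenvalue of a symmetric real matrix, via the Rayleigh quotient. -/
def lambdaMin {k : ℕ} (A : Matrix (Fin k) (Fin k) ℝ) : ℝ :=
  sInf {r | ∃ u : Fin k → ℝ, vecNorm u = 1 ∧ r = u ⬝ᵥ (A *ᵥ u)}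

/-- The G-MFCQ function `s(x)`. -/
def sFun {n m : ℕ} (K : Fin n → Matrix (Fin m) (Fin m) ℝ)
    (L : Fin n → Fin n → Matrix (Fin m) (Fin m) ℝ) (x : Fin n → ℝ) : ℝ :=
  sSup {r | ∃ b : Fin n → ℝ, vecNorm b = 1 ∧
    r = lambdaMin (-(∑ k, b k • (K k + deltaMat L k x)))}

/-- Spectral norm of a real matrix. -/
def specNorm {k : ℕ} (A : Matrix (Fin k) (Fin k) ℝ) : ℝ :=
  sSup {r | ∃ v : Fin k → ℝ, vecNorm v = 1 ∧ r = vecNorm (A *ᵥ v)}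

/-- Pencil norm `‖p‖₂`. -/
def pencilNorm {n m : ℕ} (L : Fin n → Fin n → Matrix (Fin m) (Fin m) ℝ) : ℝ :=
  sSup {r | ∃ u : Fin m → ℝ, vecNorm u = 1 ∧
    r = specNorm (Matrix.of fun i j => u ⬝ᵥ (L i j *ᵥ u))}

/-- Cone `C₁`: positive semidefinite matrices. -/
def coneC1 (n : ℕ) : Set (Matrix (Fin n) (Fin n) ℝ) := {H | H.PosSemidef}

/-- Cone `C₂`: symmetric matrices with `Hᵢᵢ ≥ 0` and `Hᵢᵢ Hⱼⱼ ≥ Hᵢⱼ²`. -/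
def coneC2 (n : ℕ) : Set (Matrix (Fin n) (Fin n) ℝ) :=
  {H | H.IsSymm ∧ ∀ i j, 0 ≤ H i i ∧ H i j ^ 2 ≤ H i i * H j j}

/-- Cone `C₃`: symmetric matrices with `Hᵢᵢ ≥ 0` and `Hᵢᵢ + Hⱼⱼ ≥ 2|Hᵢⱼ|`. -/
def coneC3 (n : ℕ) : Set (Matrix (Fin n) (Fin n) ℝ) :=
  {H | H.IsSymm ∧ ∀ i j, 0 ≤ H i i ∧ 2 * |H i j| ≤ H i i + H j j}

/-- Dual cone with respect to the trace inner product. -/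
def dualCone {n : ℕ} (C : Set (Matrix (Fin n) (Fin n) ℝ)) :
    Set (Matrix (Fin n) (Fin n) ℝ) :=
  {Y | Y.IsSymm ∧ ∀ H ∈ C, 0 ≤ (Y * H).trace}

/-- `α(Λ)` : the n×n matrix with entries `⟨Lᵢⱼ, Λ⟩ = tr(Lᵢⱼ Λ)`. -/
def alphaMat {n m : ℕ} (L : Fin n → Fin n → Matrix (Fin m) (Fin m) ℝ)
    (Λ : Matrix (Fin m) (Fin m) ℝ) : Matrix (Fin n) (Fin n) ℝ :=
  Matrix.of fun i j => (L i j * Λ).trace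

/-- Objective of the penalized problem `(P_η)`. -/
def penObj {n : ℕ} (c xc : Fin n → ℝ) (η : ℝ) (x : Fin n → ℝ) : ℝ :=
  c ⬝ᵥ x + η * vecNorm (x - xc) ^ 2

/-- `x` is an optimal solution of the penalized problem `(P_η)`. -/
def IsOptPen {n m : ℕ} (F0 : Matrix (Fin m) (Fin m) ℝ)
    (K : Fin n → Matrix (Fin m) (Fin m) ℝ)
    (L : Fin n → Fin n → Matrix (Fin m) (Fin m) ℝ)
    (c xc : Fin n → ℝ) (η : ℝ) (x : Fin n → ℝ) : Prop :=
  x ∈ feasSet F0 K L ∧ ∀ y ∈ feasSet F0 K L, penObj c xc η x ≤ penObj c xc η y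

/-- Objective of the penalized convex relaxation `(R_{η,C})`. -/
def relObj {n : ℕ} (c xc : Fin n → ℝ) (η : ℝ) (x : Fin n → ℝ)
    (X : Matrix (Fin n) (Fin n) ℝ) : ℝ :=
  c ⬝ᵥ x + η * (X.trace - 2 * (xc ⬝ᵥ x) + xc ⬝ᵥ xc)

/-- Feasibility for the relaxation with cone `C`. -/
def RelFeasible {n m : ℕ} (F0 : Matrix (Fin m) (Fin m) ℝ)
    (K : Fin n → Matrix (Fin m) (Fin m) ℝ)
    (L : Fin n → Fin n → Matrix (Fin m) (Fin m) ℝ)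
    (C : Set (Matrix (Fin n) (Fin n) ℝ))
    (x : Fin n → ℝ) (X : Matrix (Fin n) (Fin n) ℝ) : Prop :=
  X.IsSymm ∧ NegSemidef' (pencil F0 K L x X) ∧ X - vecMulVec x x ∈ C

/-- `(x, X)` is an optimal solution of the penalized convex relaxation `(R_{η,C})`. -/
def IsOptRel {n m : ℕ} (F0 : Matrix (Fin m) (Fin m) ℝ)
    (K : Fin n → Matrix (Fin m) (Fin m) ℝ)
    (L : Fin n → Fin n → Matrix (Fin m) (Fin m) ℝ)
    (c xc : Fin n → ℝ) (η : ℝ) (C : Set (Matrix (Fin n) (Fin n) ℝ))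
    (x : Fin n → ℝ) (X : Matrix (Fin n) (Fin n) ℝ) : Prop :=
  RelFeasible F0 K L C x X ∧
    ∀ y Y, RelFeasible F0 K L C y Y → relObj c xc η x X ≤ relObj c xc η y Y

/-- The KKT conditions for `(P_η)` at `(x, Λ)`. -/
def KKT {n m : ℕ} (F0 : Matrix (Fin m) (Fin m) ℝ)
    (K : Fin n → Matrix (Fin m) (Fin m) ℝ)
    (L : Fin n → Fin n → Matrix (Fin m) (Fin m) ℝ)
    (c xc : Fin n → ℝ) (η : ℝ)
    (x : Fin n → ℝ) (Λ : Matrix (Fin m) (Fin m) ℝ) : Prop :=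
  Λ.IsSymm ∧ Λ.PosSemidef ∧
  c + (2 * η) • (x - xc) + (∑ k, ((K k * Λ).trace) • (Pi.single k 1 : Fin n → ℝ))
      + (2 : ℝ) • (alphaMat L Λ *ᵥ x) = 0 ∧
  Λ * pencil F0 K L x (vecMulVec x x) = 0


lemma vecNorm_nonneg' {k : ℕ} (u : Fin k → ℝ) : 0 ≤ vecNorm u := Real.sqrt_nonneg _

lemma continuous_vecNorm {k : ℕ} : Continuous (vecNorm : (Fin k → ℝ) → ℝ) := by
  unfold vecNorm
  fun_prop

lemma vecNorm_smul {k : ℕ} (c : ℝ) (u : Fin k → ℝ) : vecNorm (c • u) = |c| * vecNorm u := by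
  simp only [vecNorm, Pi.smul_apply, smul_eq_mul, mul_pow, ← Finset.mul_sum]
  rw [Real.sqrt_mul (sq_nonneg c), Real.sqrt_sq_eq_abs]

lemma abs_le_vecNorm {k : ℕ} (u : Fin k → ℝ) (i : Fin k) : |u i| ≤ vecNorm u := by
  rw [← Real.sqrt_sq_eq_abs]
  exact Real.sqrt_le_sqrt
    (Finset.single_le_sum (f := fun i => u i ^ 2) (fun j _ => sq_nonneg (u j)) (Finset.mem_univ i))

lemma isCompact_sphere' (k : ℕ) : IsCompact {u : Fin k → ℝ | vecNorm u = 1} := by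
  refine (isCompact_closedBall (0 : Fin k → ℝ) 1).of_isClosed_subset
    (isClosed_singleton.preimage continuous_vecNorm) fun u (hu : vecNorm u = 1) => ?_
  rw [mem_closedBall_zero_iff, pi_norm_le_iff_of_nonneg zero_le_one]
  exact fun i => (abs_le_vecNorm u i).trans hu.le

lemma exists_vecNorm_eq_one {k : ℕ} (hk : 0 < k) : ∃ u : Fin k → ℝ, vecNorm u = 1 := by
  refine ⟨Pi.single ⟨0, hk⟩ 1, ?_⟩
  simp [vecNorm, Pi.single_apply]

lemma abs_dotProduct_le {k : ℕ} (a b : Fin k → ℝ) : |a ⬝ᵥ b| ≤ vecNorm a * vecNorm b := by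
  unfold vecNorm
  rw [← Real.sqrt_mul (Finset.sum_nonneg fun i _ => sq_nonneg _)]
  exact Real.abs_le_sqrt (Finset.sum_mul_sq_le_sq_mul_sq _ _ _)

lemma bddAbove_specNorm {k : ℕ} (A : Matrix (Fin k) (Fin k) ℝ) :
    BddAbove {r | ∃ v : Fin k → ℝ, vecNorm v = 1 ∧ r = vecNorm (A *ᵥ v)} := by
  have hc : Continuous fun v : Fin k → ℝ => vecNorm (A *ᵥ v) :=
    continuous_vecNorm.comp (by fun_prop)
  obtain ⟨B, hB⟩ := (isCompact_sphere' k).bddAbove_image hc.continuousOn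
  refine ⟨B, ?_⟩
  rintro r ⟨v, hv, rfl⟩
  exact hB ⟨v, hv, rfl⟩

lemma vecNorm_mulVec_le {k : ℕ} (A : Matrix (Fin k) (Fin k) ℝ) (v : Fin k → ℝ) :
    vecNorm (A *ᵥ v) ≤ specNorm A * vecNorm v := by
  rcases (vecNorm_nonneg' v).eq_or_lt with h | h
  · have hv : v = 0 := by
      ext i
      exact abs_nonpos_iff.mp ((abs_le_vecNorm v i).trans h.ge)
    subst hv
    simp [vecNorm]
  · have h1 : vecNorm ((vecNorm v)⁻¹ • v) = 1 := by
      rw [vecNorm_smul, abs_of_pos (inv_pos.mpr h), inv_mul_cancel₀ h.ne']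
    have h2 : vecNorm (A *ᵥ ((vecNorm v)⁻¹ • v)) ≤ specNorm A :=
      le_csSup (bddAbove_specNorm A) ⟨_, h1, rfl⟩
    rw [mulVec_smul, vecNorm_smul, abs_of_pos (inv_pos.mpr h), inv_mul_le_iff₀ h] at h2
    linarith

lemma dotProduct_mulVec_le {k : ℕ} (A : Matrix (Fin k) (Fin k) ℝ) (b v : Fin k → ℝ)
    (hb : vecNorm b = 1) : |b ⬝ᵥ (A *ᵥ v)| ≤ specNorm A * vecNorm v := by
  have h := abs_dotProduct_le b (A *ᵥ v)
  rw [hb, one_mul] at h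
  exact h.trans (vecNorm_mulVec_le A v)

/-- The supremum defining `pencilNorm` is over a bounded set: `‖M(u) v‖₂` is jointly continuous in
`(u, v)` on a product of two compact spheres. -/
lemma le_pencilNorm {n m : ℕ} (hn : 0 < n) (L : Fin n → Fin n → Matrix (Fin m) (Fin m) ℝ)
    (u : Fin m → ℝ) (hu : vecNorm u = 1) :
    specNorm (Matrix.of fun i j => u ⬝ᵥ (L i j *ᵥ u)) ≤ pencilNorm L := by
  have hc : Continuous fun p : (Fin m → ℝ) × (Fin n → ℝ) =>
      vecNorm ((Matrix.of fun i j => p.1 ⬝ᵥ (L i j *ᵥ p.1)) *ᵥ p.2) := by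
    refine continuous_vecNorm.comp (continuous_pi fun i => ?_)
    simp only [mulVec, dotProduct, of_apply]
    fun_prop
  obtain ⟨B, hB⟩ := ((isCompact_sphere' m).prod (isCompact_sphere' n)).bddAbove_image
    hc.continuousOn
  refine le_csSup ⟨B, ?_⟩ ⟨u, hu, rfl⟩
  rintro r ⟨w, hw, rfl⟩
  obtain ⟨v₀, hv₀⟩ := exists_vecNorm_eq_one hn
  refine csSup_le ⟨_, v₀, hv₀, rfl⟩ ?_
  rintro r ⟨v, hv, rfl⟩
  exact hB ⟨(w, v), ⟨hw, hv⟩, rfl⟩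

lemma lambdaMin_le {k : ℕ} (A : Matrix (Fin k) (Fin k) ℝ) (u : Fin k → ℝ) (hu : vecNorm u = 1) :
    lambdaMin A ≤ u ⬝ᵥ (A *ᵥ u) := by
  have hc : Continuous fun v : Fin k → ℝ => v ⬝ᵥ (A *ᵥ v) := by fun_prop
  obtain ⟨B, hB⟩ := (isCompact_sphere' k).bddBelow_image hc.continuousOn
  refine csInf_le ⟨B, ?_⟩ ⟨u, hu, rfl⟩
  rintro r ⟨v, hv, rfl⟩
  exact hB ⟨v, hv, rfl⟩

/-- The supremum defining `sFun` is over a bounded set: `lambdaMin` is dominated by the Rayleigh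
quotient at any fixed unit vector, which is continuous in `b`. -/
lemma le_sFun {n m : ℕ} (hm : 0 < m) (K : Fin n → Matrix (Fin m) (Fin m) ℝ)
    (L : Fin n → Fin n → Matrix (Fin m) (Fin m) ℝ) (x b : Fin n → ℝ) (hb : vecNorm b = 1) :
    lambdaMin (-(∑ k, b k • (K k + deltaMat L k x))) ≤ sFun K L x := by
  obtain ⟨u, hu⟩ := exists_vecNorm_eq_one hm
  have hc : Continuous fun b : Fin n → ℝ =>
      u ⬝ᵥ ((-(∑ k, b k • (K k + deltaMat L k x))) *ᵥ u) := by fun_prop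
  obtain ⟨B, hB⟩ := (isCompact_sphere' n).bddAbove_image hc.continuousOn
  refine le_csSup ⟨B, ?_⟩ ⟨b, hb, rfl⟩
  rintro r ⟨c, hc, rfl⟩
  exact (lambdaMin_le _ u hu).trans (hB ⟨c, hc, rfl⟩)

lemma quadForm_eq {n m : ℕ} (K : Fin n → Matrix (Fin m) (Fin m) ℝ)
    (L : Fin n → Fin n → Matrix (Fin m) (Fin m) ℝ) (x b : Fin n → ℝ) (u : Fin m → ℝ) :
    u ⬝ᵥ ((-(∑ k, b k • (K k + deltaMat L k x))) *ᵥ u) =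
      -(∑ k, b k * (u ⬝ᵥ (K k *ᵥ u)))
        - 2 * (b ⬝ᵥ ((Matrix.of fun i j => u ⬝ᵥ (L i j *ᵥ u)) *ᵥ x)) := by
  have h : b ⬝ᵥ ((Matrix.of fun i j => u ⬝ᵥ (L i j *ᵥ u)) *ᵥ x) =
      ∑ k, b k * ∑ i, x i * (u ⬝ᵥ (L k i *ᵥ u)) := by
    simp only [dotProduct, mulVec, of_apply, mul_comm (x _)]
  rw [h]
  simp only [deltaMat, neg_mulVec, sum_mulVec, smul_mulVec, add_mulVec, dotProduct_neg,
    dotProduct_sum, dotProduct_smul, dotProduct_add, smul_eq_mul, mul_add, Finset.sum_add_distrib,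
    Finset.mul_sum, mul_left_comm (2 : ℝ)]
  ring

theorem bmi_s_lipschitz {n m : ℕ} (hn : 0 < n) (hm : 0 < m)
    (K : Fin n → Matrix (Fin m) (Fin m) ℝ)
    (L : Fin n → Fin n → Matrix (Fin m) (Fin m) ℝ)
    (hK : ∀ k, (K k).IsSymm)
    (hL : ∀ i j, (L i j).IsSymm) (hLsy : ∀ i j, L i j = L j i) :
    ∀ x y : Fin n → ℝ,
      sFun K L x - sFun K L y ≤ 2 * pencilNorm L * vecNorm (x - y) := by
  intro x y
  obtain ⟨b₀, hb₀⟩ := exists_vecNorm_eq_one hn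
  obtain ⟨u₀, hu₀⟩ := exists_vecNorm_eq_one hm
  rw [sub_le_iff_le_add]
  refine csSup_le ⟨_, b₀, hb₀, rfl⟩ ?_
  rintro r ⟨b, hb, rfl⟩
  refine le_trans ?_ (add_le_add_right (le_sFun hm K L y b hb) _)
  rw [← sub_le_iff_le_add']
  refine le_csInf ⟨_, u₀, hu₀, rfl⟩ ?_
  rintro r ⟨u, hu, rfl⟩
  have h1 := lambdaMin_le (-(∑ k, b k • (K k + deltaMat L k x))) u hu
  have h2 := (abs_le.mp (dotProduct_mulVec_le
    (Matrix.of fun i j => u ⬝ᵥ (L i j *ᵥ u)) b (x - y) hb)).1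
  have h3 := mul_le_mul_of_nonneg_right (le_pencilNorm hn L u hu) (vecNorm_nonneg' (x - y))
  rw [mulVec_sub, dotProduct_sub] at h2
  rw [quadForm_eq] at h1 ⊢
  linarith
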